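/- Let a < b be real, σ ∈ (0,1], let φ be continuously differentiable on an open interval containing [a,b] with φ′ > 0 there, let α > 0, β > 0, and let f : ℝ → ℂ be continuous on [a,b]. Then for every t ∈ [a,b], (I_b^{α,σ,φ} (I_b^{β,σ,φ} f))(t) = (I_b^{α+β,σ,φ} f)(t) (semigroup property of the right proportional fractional integrals with respect to φ). -/

import Mathlib

open MeasureTheory intervalIntegral Set

/-- The right proportional fractional integral of `f` of order `α > 0` with respect to `φ`
(with derivative `φ'`), proportion `σ`, based at `b`:
`(I_b^{α,σ,φ} f)(t) = (1/(σ^α Γ(α))) ∫_t^b e^{((σ-1)/σ)(φ(τ)-φ(t))} (φ(τ)-φ(t))^{α-1} f(τ) φ'(τ) dτ`. -/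
noncomputable def propIntRight (b α σ : ℝ) (φ φ' : ℝ → ℝ) (f : ℝ → ℂ) (t : ℝ) : ℂ :=
  ((σ ^ α * Real.Gamma α)⁻¹ : ℝ) •
    ∫ τ in t..b,
      (Real.exp ((σ - 1) / σ * (φ τ - φ t)) * (φ τ - φ t) ^ (α - 1) * φ' τ) • f τ

/-!
Write `I_b^α f (t) = ∫_t^b K_α (φ τ - φ t) f(τ) dφ(τ)` with
`K_α x = e^{((σ-1)/σ) x} x^{α-1} / (σ^α Γ(α))`. Because the exponential is multiplicative, Euler's
Beta integral says that `K_α * K_β = K_{α+β}` for the convolution on `[0, L]`. After the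
substitution `u = φ τ` this is the statement that the kernel of `I_b^α ∘ I_b^β`, obtained by
exchanging the order of integration over the triangle `t < τ < s ≤ b`, is the kernel of `I_b^{α+β}`.
The kernels are nonnegative, so absolute convergence of the integral of order `α + β` suffices for
the exchange.
-/

section Volterra

variable {X E : Type*} [LinearOrder X] [TopologicalSpace X] [OrderClosedTopology X]
  [SecondCountableTopology X] [MeasurableSpace X] [OpensMeasurableSpace X]
  [NormedAddCommGroup E] [NormedSpace ℝ E] {μ ν : Measure X} [SFinite μ] [SFinite ν]

theorem integral_setIntegral_Ioi_swap {F : X → X → E}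
    (hF : IntegrableOn (Function.uncurry F) {p | p.1 < p.2} (μ.prod ν)) :
    ∫ x, ∫ y in Ioi x, F x y ∂ν ∂μ = ∫ y, ∫ x in Iio y, F x y ∂μ ∂ν := by
  have hlt : MeasurableSet {p : X × X | p.1 < p.2} := measurableSet_lt measurable_fst measurable_snd
  calc ∫ x, ∫ y in Ioi x, F x y ∂ν ∂μ
      = ∫ x, ∫ y, {p : X × X | p.1 < p.2}.indicator (Function.uncurry F) (x, y) ∂ν ∂μ := by
        simp_rw [← MeasureTheory.integral_indicator measurableSet_Ioi]
        rfl
    _ = ∫ y, ∫ x, {p : X × X | p.1 < p.2}.indicator (Function.uncurry F) (x, y) ∂μ ∂ν :=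
        integral_integral_swap (hF.integrable_indicator hlt)
    _ = ∫ y, ∫ x in Iio y, F x y ∂μ ∂ν := by
        simp_rw [← MeasureTheory.integral_indicator measurableSet_Iio]
        rfl

variable {k : X → X → ℝ} {g : X → E}

theorem integrableOn_lt_smul_of_nonneg
    (hmeas : AEStronglyMeasurable (fun p : X × X => k p.1 p.2 • g p.2)
      ((μ.prod ν).restrict {p | p.1 < p.2}))
    (hk_nonneg : ∀ᵐ y ∂ν, ∀ᵐ x ∂μ.restrict (Iio y), 0 ≤ k x y)
    (hk_int : ∀ᵐ y ∂ν, IntegrableOn (fun x => k x y) (Iio y) μ)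
    (hg : Integrable (fun y => (∫ x in Iio y, k x y ∂μ) • g y) ν) :
    IntegrableOn (fun p : X × X => k p.1 p.2 • g p.2) {p | p.1 < p.2} (μ.prod ν) := by
  have hlt : MeasurableSet {p : X × X | p.1 < p.2} := measurableSet_lt measurable_fst measurable_snd
  have section_eq (y : X) :
      (fun x => {p : X × X | p.1 < p.2}.indicator (fun p => k p.1 p.2 • g p.2) (x, y)) =
        (Iio y).indicator (fun x => k x y • g y) := rfl
  rw [← integrable_indicator_iff hlt,
    integrable_prod_iff' ((aestronglyMeasurable_indicator_iff hlt).2 hmeas)]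
  constructor
  · filter_upwards [hk_int] with y hy
    rw [section_eq, integrable_indicator_iff measurableSet_Iio]
    exact Integrable.smul_const hy (g y)
  · refine hg.norm.congr ?_
    filter_upwards [hk_nonneg] with y hy
    calc ‖(∫ x in Iio y, k x y ∂μ) • g y‖
        = ∫ x in Iio y, k x y * ‖g y‖ ∂μ := by
          rw [norm_smul, Real.norm_of_nonneg (integral_nonneg_of_ae hy),
            MeasureTheory.integral_mul_const]
      _ = ∫ x in Iio y, ‖k x y • g y‖ ∂μ := by
          refine integral_congr_ae ?_
          filter_upwards [hy] with x hx
          rw [norm_smul, Real.norm_of_nonneg hx]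
      _ = ∫ x, ‖{p : X × X | p.1 < p.2}.indicator (fun p => k p.1 p.2 • g p.2) (x, y)‖ ∂μ := by
          rw [← MeasureTheory.integral_indicator measurableSet_Iio]
          simp_rw [← norm_indicator_eq_indicator_norm]
          rfl

theorem integral_setIntegral_Ioi_smul_of_nonneg [CompleteSpace E]
    (hmeas : AEStronglyMeasurable (fun p : X × X => k p.1 p.2 • g p.2)
      ((μ.prod ν).restrict {p | p.1 < p.2}))
    (hk_nonneg : ∀ᵐ y ∂ν, ∀ᵐ x ∂μ.restrict (Iio y), 0 ≤ k x y)
    (hk_int : ∀ᵐ y ∂ν, IntegrableOn (fun x => k x y) (Iio y) μ)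
    (hg : Integrable (fun y => (∫ x in Iio y, k x y ∂μ) • g y) ν) :
    ∫ x, ∫ y in Ioi x, k x y • g y ∂ν ∂μ = ∫ y, (∫ x in Iio y, k x y ∂μ) • g y ∂ν := by
  rw [integral_setIntegral_Ioi_swap (integrableOn_lt_smul_of_nonneg hmeas hk_nonneg hk_int hg)]
  simp_rw [_root_.integral_smul_const]

theorem setIntegral_Ioc_setIntegral_Ioc_smul_of_nonneg [CompleteSpace E] {a b : X} {K : X → ℝ}
    (hmeas : AEStronglyMeasurable (fun p : X × X => k p.1 p.2 • g p.2)
      ((μ.restrict (Ioc a b)).prod (μ.restrict (Ioc a b))))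
    (hk_nonneg : ∀ y ∈ Ioc a b, ∀ x ∈ Ioo a y, 0 ≤ k x y)
    (hk_int : ∀ y ∈ Ioc a b, IntegrableOn (fun x => k x y) (Ioo a y) μ)
    (hkK : ∀ y ∈ Ioc a b, ∫ x in Ioo a y, k x y ∂μ = K y)
    (hg : IntegrableOn (fun y => K y • g y) (Ioc a b) μ) :
    ∫ x in Ioc a b, ∫ y in Ioc x b, k x y • g y ∂μ ∂μ = ∫ y in Ioc a b, K y • g y ∂μ := by
  have hmem : ∀ᵐ y ∂μ.restrict (Ioc a b), y ∈ Ioc a b := ae_restrict_mem measurableSet_Ioc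
  have restrict_Ioi : ∀ x ∈ Ioc a b,
      (μ.restrict (Ioc a b)).restrict (Ioi x) = μ.restrict (Ioc x b) := fun x hx => by
    rw [Measure.restrict_restrict measurableSet_Ioi, inter_comm, Ioc_inter_Ioi,
      sup_eq_right.2 hx.1.le]
  have restrict_Iio : ∀ y ∈ Ioc a b,
      (μ.restrict (Ioc a b)).restrict (Iio y) = μ.restrict (Ioo a y) := fun y hy => by
    have : Iio y ∩ Ioc a b = Ioo a y := by grind
    rw [Measure.restrict_restrict measurableSet_Iio, this]
  have kernel_eq : ∀ y ∈ Ioc a b,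
      (∫ x in Iio y, k x y ∂μ.restrict (Ioc a b)) • g y = K y • g y := fun y hy => by
    rw [restrict_Iio y hy, hkK y hy]
  calc ∫ x in Ioc a b, ∫ y in Ioc x b, k x y • g y ∂μ ∂μ
      = ∫ x in Ioc a b, ∫ y in Ioi x, k x y • g y ∂μ.restrict (Ioc a b) ∂μ :=
        setIntegral_congr_fun measurableSet_Ioc fun x hx => by simp only [restrict_Ioi x hx]
    _ = ∫ y in Ioc a b, (∫ x in Iio y, k x y ∂μ.restrict (Ioc a b)) • g y ∂μ := by
        refine integral_setIntegral_Ioi_smul_of_nonneg hmeas.restrict ?_ ?_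
          (hg.congr (hmem.mono fun y hy => (kernel_eq y hy).symm))
        · filter_upwards [hmem] with y hy
          rw [restrict_Iio y hy]
          exact ae_restrict_of_forall_mem measurableSet_Ioo (hk_nonneg y hy)
        · filter_upwards [hmem] with y hy
          rw [IntegrableOn, restrict_Iio y hy]
          exact hk_int y hy
    _ = ∫ y in Ioc a b, K y • g y ∂μ := setIntegral_congr_fun measurableSet_Ioc kernel_eq

end Volterra

/-- The convolution kernel `K_α x = e^{((σ-1)/σ) x} x^{α-1} / (σ^α Γ(α))` of the proportional
fractional integral of order `α`, including its normalising constant. -/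
noncomputable def propIntKernel (σ α x : ℝ) : ℝ :=
  (σ ^ α * Real.Gamma α)⁻¹ * (Real.exp ((σ - 1) / σ * x) * x ^ (α - 1))

section Kernel

variable {σ α β : ℝ}

theorem propIntKernel_pos (hσ : 0 < σ) (hα : 0 < α) {x : ℝ} (hx : 0 < x) :
    0 < propIntKernel σ α x := by
  have := Real.Gamma_pos_of_pos hα
  unfold propIntKernel
  positivity

theorem measurable_propIntKernel : Measurable (propIntKernel σ α) := by
  unfold propIntKernel
  fun_prop

theorem integral_rpow_mul_sub_rpow (hα : 0 < α) (hβ : 0 < β) {L : ℝ} (hL : 0 < L) :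
    ∫ x in (0 : ℝ)..L, x ^ (α - 1) * (L - x) ^ (β - 1) =
      ProbabilityTheory.beta α β * L ^ (α + β - 1) := by
  have beta_eq : Complex.betaIntegral α β = ProbabilityTheory.beta α β := by
    rw [Complex.betaIntegral_eq_Gamma_mul_div _ _ (by simpa) (by simpa), ProbabilityTheory.beta]
    simp only [← Complex.ofReal_add, Complex.Gamma_ofReal, Complex.ofReal_mul, Complex.ofReal_div]
  apply Complex.ofReal_injective
  calc ((∫ x in (0 : ℝ)..L, x ^ (α - 1) * (L - x) ^ (β - 1) : ℝ) : ℂ)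
      = ∫ x in (0 : ℝ)..L, (x : ℂ) ^ ((α : ℂ) - 1) * ((L : ℂ) - x) ^ ((β : ℂ) - 1) := by
        rw [← intervalIntegral.integral_ofReal]
        refine integral_congr fun x hx => ?_
        rw [uIcc_of_le hL.le] at hx
        simp [Complex.ofReal_cpow hx.1, Complex.ofReal_cpow (sub_nonneg.2 hx.2)]
    _ = (L : ℂ) ^ ((α : ℂ) + β - 1) * ProbabilityTheory.beta α β := by
        rw [Complex.betaIntegral_scaled _ _ hL, beta_eq]
    _ = ((ProbabilityTheory.beta α β * L ^ (α + β - 1) : ℝ) : ℂ) := by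
        rw [mul_comm]
        simp [Complex.ofReal_cpow hL.le]

theorem integral_propIntKernel_mul_propIntKernel_sub (hσ : 0 < σ) (hα : 0 < α) (hβ : 0 < β)
    {L : ℝ} (hL : 0 < L) :
    ∫ x in (0 : ℝ)..L, propIntKernel σ α x * propIntKernel σ β (L - x) =
      propIntKernel σ (α + β) L := by
  have factor_exp (x : ℝ) : propIntKernel σ α x * propIntKernel σ β (L - x) =
      (σ ^ α * Real.Gamma α)⁻¹ * (σ ^ β * Real.Gamma β)⁻¹ * Real.exp ((σ - 1) / σ * L) *
        (x ^ (α - 1) * (L - x) ^ (β - 1)) := by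
    have : Real.exp ((σ - 1) / σ * L) =
        Real.exp ((σ - 1) / σ * x) * Real.exp ((σ - 1) / σ * (L - x)) := by
      rw [← Real.exp_add, ← mul_add, add_sub_cancel]
    rw [propIntKernel, propIntKernel, this]
    ring
  simp_rw [factor_exp]
  rw [intervalIntegral.integral_const_mul, integral_rpow_mul_sub_rpow hα hβ hL, propIntKernel,
    ProbabilityTheory.beta, Real.rpow_add hσ]
  have := (Real.Gamma_pos_of_pos hα).ne'
  have := (Real.Gamma_pos_of_pos hβ).ne'
  field_simp

end Kernel

/-- The function `φ` is a change of time on `[x, y]` with speed `φ'`: it is continuous and strictly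
increasing on `[x, y]`, and `φ'` is its derivative on the open interval (at the endpoints `φ` may
have none, as for `√` at `0`). It plays the part of the integrator `dφ`. -/
structure IsTimeChange (φ φ' : ℝ → ℝ) (x y : ℝ) : Prop where
  continuousOn : ContinuousOn φ (Icc x y)
  strictMonoOn : StrictMonoOn φ (Icc x y)
  hasDerivAt : ∀ u ∈ Ioo x y, HasDerivAt φ (φ' u) u

/-- The kernel of `I_b^α ∘ I_b^β` evaluated at `t`, before integration over the intermediate
time `τ`: it weighs the value at `s` along the chain `t < τ < s`, with `dφ(τ) = φ' τ dτ`
included. -/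
noncomputable def propIntChainKernel (φ φ' : ℝ → ℝ) (σ α β t τ s : ℝ) : ℝ :=
  φ' τ * (propIntKernel σ α (φ τ - φ t) * propIntKernel σ β (φ s - φ τ))

namespace IsTimeChange

variable {E : Type*} [NormedAddCommGroup E] [NormedSpace ℝ E]
  {φ φ' : ℝ → ℝ} {x y σ α β : ℝ}

theorem of_hasDerivAt_pos {s : Set ℝ} (hs : Icc x y ⊆ s)
    (hd : ∀ u ∈ s, HasDerivAt φ (φ' u) u) (hpos : ∀ u ∈ s, 0 < φ' u) : IsTimeChange φ φ' x y where
  continuousOn := (HasDerivAt.continuousOn hd).mono hs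
  strictMonoOn := strictMonoOn_of_hasDerivWithinAt_pos (convex_Icc x y)
    ((HasDerivAt.continuousOn hd).mono hs)
    (fun u hu => (hd u (hs (interior_subset hu))).hasDerivWithinAt)
    (fun u hu => hpos u (hs (interior_subset hu)))
  hasDerivAt u hu := hd u (hs (Ioo_subset_Icc_self hu))

theorem mono_right (hφ : IsTimeChange φ φ' x y) {z : ℝ} (hz : z ≤ y) : IsTimeChange φ φ' x z where
  continuousOn := hφ.continuousOn.mono (Icc_subset_Icc_right hz)
  strictMonoOn := hφ.strictMonoOn.mono (Icc_subset_Icc_right hz)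
  hasDerivAt u hu := hφ.hasDerivAt u (Ioo_subset_Ioo_right hz hu)

theorem increment_pos (hφ : IsTimeChange φ φ' x y) {u v : ℝ} (hu : x ≤ u) (huv : u < v)
    (hv : v ≤ y) : 0 < φ v - φ u :=
  sub_pos.2 (hφ.strictMonoOn ⟨hu, huv.le.trans hv⟩ ⟨hu.trans huv.le, hv⟩ huv)

theorem deriv_nonneg (hφ : IsTimeChange φ φ' x y) {u : ℝ} (hu : u ∈ Ioo x y) : 0 ≤ φ' u := by
  have hwithin := ((hφ.hasDerivAt u hu).hasDerivWithinAt (s := Ioo x y)).derivWithin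
    (isOpen_Ioo.uniqueDiffWithinAt hu)
  rw [← hwithin]
  exact (hφ.strictMonoOn.monotoneOn.mono Ioo_subset_Icc_self).derivWithin_nonneg

theorem aemeasurable (hφ : IsTimeChange φ φ' x y) : AEMeasurable φ (volume.restrict (Ioc x y)) :=
  (hφ.continuousOn.mono Ioc_subset_Icc_self).aemeasurable measurableSet_Ioc

theorem aemeasurable_deriv (hφ : IsTimeChange φ φ' x y) :
    AEMeasurable φ' (volume.restrict (Ioc x y)) := by
  rw [← restrict_Ioo_eq_restrict_Ioc]
  refine (_root_.aemeasurable_deriv φ _).congr ?_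
  filter_upwards [ae_restrict_mem measurableSet_Ioo] with u hu
  exact (hφ.hasDerivAt u hu).deriv

theorem setIntegral_deriv_smul_comp (hφ : IsTimeChange φ φ' x y) (hxy : x ≤ y)
    (g : ℝ → E) :
    ∫ u in Ioo x y, φ' u • g (φ u) = ∫ v in Ioo (φ x) (φ y), g v := by
  rw [← hφ.continuousOn.image_Ioo_of_strictMonoOn hxy hφ.strictMonoOn]
  exact (integral_image_eq_integral_deriv_smul_of_monotoneOn measurableSet_Ioo
    (fun u hu => (hφ.hasDerivAt u hu).hasDerivWithinAt)
    (hφ.strictMonoOn.monotoneOn.mono Ioo_subset_Icc_self) g).symm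

theorem setIntegral_propIntChainKernel (hφ : IsTimeChange φ φ' x y) (hxy : x < y) (hσ : 0 < σ)
    (hα : 0 < α) (hβ : 0 < β) :
    ∫ u in Ioo x y, propIntChainKernel φ φ' σ α β x u y = propIntKernel σ (α + β) (φ y - φ x) := by
  have hpos : 0 < φ y - φ x := hφ.increment_pos le_rfl hxy le_rfl
  calc ∫ u in Ioo x y, propIntChainKernel φ φ' σ α β x u y
      = ∫ v in Ioo (φ x) (φ y), propIntKernel σ α (v - φ x) * propIntKernel σ β (φ y - v) :=
        hφ.setIntegral_deriv_smul_comp hxy.le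
          fun v => propIntKernel σ α (v - φ x) * propIntKernel σ β (φ y - v)
    _ = ∫ v in φ x..φ y, propIntKernel σ α (v - φ x) *
          propIntKernel σ β (φ y - φ x - (v - φ x)) := by
        rw [integral_of_le (sub_nonneg.1 hpos.le), integral_Ioc_eq_integral_Ioo]
        simp_rw [sub_sub_sub_cancel_right]
    _ = ∫ w in (0 : ℝ)..(φ y - φ x), propIntKernel σ α w * propIntKernel σ β (φ y - φ x - w) := by
        rw [integral_comp_sub_right
          (fun w => propIntKernel σ α w * propIntKernel σ β (φ y - φ x - w)), sub_self]
    _ = propIntKernel σ (α + β) (φ y - φ x) :=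
        integral_propIntKernel_mul_propIntKernel_sub hσ hα hβ hpos

theorem integrableOn_propIntChainKernel (hφ : IsTimeChange φ φ' x y) (hxy : x < y)
    (hσ : 0 < σ) (hα : 0 < α) (hβ : 0 < β) :
    IntegrableOn (fun u => propIntChainKernel φ φ' σ α β x u y) (Ioo x y) := by
  refine .of_integral_ne_zero ?_
  rw [hφ.setIntegral_propIntChainKernel hxy hσ hα hβ]
  exact (propIntKernel_pos hσ (add_pos hα hβ) (hφ.increment_pos le_rfl hxy le_rfl)).ne'

theorem propIntChainKernel_nonneg (hφ : IsTimeChange φ φ' x y) (hσ : 0 < σ) (hα : 0 < α)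
    (hβ : 0 < β) {u : ℝ} (hu : u ∈ Ioo x y) : 0 ≤ propIntChainKernel φ φ' σ α β x u y :=
  mul_nonneg (hφ.deriv_nonneg hu)
    (mul_pos (propIntKernel_pos hσ hα (hφ.increment_pos le_rfl hu.1 hu.2.le))
      (propIntKernel_pos hσ hβ (hφ.increment_pos hu.1.le hu.2 le_rfl))).le

theorem aemeasurable_propIntChainKernel (hφ : IsTimeChange φ φ' x y) :
    AEMeasurable (fun p : ℝ × ℝ => propIntChainKernel φ φ' σ α β x p.1 p.2)
      ((volume.restrict (Ioc x y)).prod (volume.restrict (Ioc x y))) := by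
  have hφ_fst := hφ.aemeasurable.comp_fst (ν := volume.restrict (Ioc x y))
  have hφ_snd := hφ.aemeasurable.comp_snd (μ := volume.restrict (Ioc x y))
  have hφ'_fst := hφ.aemeasurable_deriv.comp_fst (ν := volume.restrict (Ioc x y))
  exact hφ'_fst.mul
    ((measurable_propIntKernel.comp_aemeasurable (hφ_fst.sub_const _)).mul
      (measurable_propIntKernel.comp_aemeasurable (hφ_snd.sub hφ_fst)))

theorem aestronglyMeasurable_of_propIntKernel_smul (hφ : IsTimeChange φ φ' x y) (hσ : 0 < σ)
    (hα : 0 < α) {g : ℝ → E}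
    (hg : AEStronglyMeasurable (fun u => propIntKernel σ α (φ u - φ x) • g u)
      (volume.restrict (Ioc x y))) :
    AEStronglyMeasurable g (volume.restrict (Ioc x y)) := by
  have hker : AEMeasurable (fun u => propIntKernel σ α (φ u - φ x)) (volume.restrict (Ioc x y)) :=
    measurable_propIntKernel.comp_aemeasurable (hφ.aemeasurable.sub_const _)
  refine (hker.inv.aestronglyMeasurable.smul hg).congr ?_
  filter_upwards [ae_restrict_mem measurableSet_Ioc] with u hu
  exact inv_smul_smul₀ (propIntKernel_pos hσ hα (hφ.increment_pos le_rfl hu.1 hu.2)).ne' _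

theorem setIntegral_Ioc_setIntegral_Ioc_propIntChainKernel_smul [CompleteSpace E]
    (hφ : IsTimeChange φ φ' x y) (hσ : 0 < σ) (hα : 0 < α) (hβ : 0 < β) {g : ℝ → E}
    (hg : IntegrableOn (fun s => propIntKernel σ (α + β) (φ s - φ x) • g s) (Ioc x y)) :
    ∫ u in Ioc x y, ∫ s in Ioc u y, propIntChainKernel φ φ' σ α β x u s • g s =
      ∫ s in Ioc x y, propIntKernel σ (α + β) (φ s - φ x) • g s := by
  have hg_meas : AEStronglyMeasurable g (volume.restrict (Ioc x y)) :=
    hφ.aestronglyMeasurable_of_propIntKernel_smul hσ (add_pos hα hβ) hg.aestronglyMeasurable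
  exact setIntegral_Ioc_setIntegral_Ioc_smul_of_nonneg
    (hφ.aemeasurable_propIntChainKernel.aestronglyMeasurable.smul hg_meas.comp_snd)
    (fun s hs _ hu => (hφ.mono_right hs.2).propIntChainKernel_nonneg hσ hα hβ hu)
    (fun s hs => (hφ.mono_right hs.2).integrableOn_propIntChainKernel hs.1 hσ hα hβ)
    (fun s hs => (hφ.mono_right hs.2).setIntegral_propIntChainKernel hs.1 hσ hα hβ) hg

theorem integrableOn_rpow_mul_deriv (hφ : IsTimeChange φ φ' x y) (hα : 0 < α) :
    IntegrableOn (fun u => (φ u - φ x) ^ (α - 1) * φ' u) (Ioc x y) := by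
  have hincr : ∀ u ∈ Ioo x y, 0 < φ u - φ x := fun u hu =>
    hφ.increment_pos le_rfl hu.1 hu.2.le
  have hderiv : ∀ u ∈ Ioo x y,
      HasDerivAt (fun u => (φ u - φ x) ^ α) (φ' u * α * (φ u - φ x) ^ (α - 1)) u := fun u hu =>
    ((hφ.hasDerivAt u hu).sub_const (φ x)).rpow_const (.inl (hincr u hu).ne')
  have hint := integrableOn_deriv_of_nonneg
    ((hφ.continuousOn.sub continuousOn_const).rpow_const fun _ _ => .inr hα.le) hderiv
    fun u hu => mul_nonneg (mul_nonneg (hφ.deriv_nonneg hu) hα.le)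
      (Real.rpow_nonneg (hincr u hu).le _)
  refine (hint.const_mul α⁻¹).congr (.of_forall fun u => ?_)
  field_simp

theorem integrableOn_propIntKernel_smul (hφ : IsTimeChange φ φ' x y) (hα : 0 < α)
    {f : ℝ → E} (hf : ContinuousOn f (Icc x y)) :
    IntegrableOn (fun u => propIntKernel σ α (φ u - φ x) • φ' u • f u) (Ioc x y) := by
  have hcont : ContinuousOn
      (fun u => ((σ ^ α * Real.Gamma α)⁻¹ * Real.exp ((σ - 1) / σ * (φ u - φ x))) • f u)
      (Icc x y) := by
    have := hφ.continuousOn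
    fun_prop
  have hint : IntegrableOn (fun u => (φ u - φ x) ^ (α - 1) * φ' u) (Icc x y) :=
    (integrableOn_Icc_iff_integrableOn_Ioc enorm_ne_top).2 (hφ.integrableOn_rpow_mul_deriv hα)
  refine ((hint.smul_continuousOn hcont isCompact_Icc).mono_set Ioc_subset_Icc_self).congr
    (.of_forall fun u => ?_)
  simp only [propIntKernel, smul_smul]
  ring_nf

end IsTimeChange

section Semigroup

variable {b t σ α β : ℝ} {φ φ' : ℝ → ℝ} {f : ℝ → ℂ}

theorem propIntRight_eq_setIntegral (htb : t ≤ b) :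
    propIntRight b α σ φ φ' f t =
      ∫ τ in Ioc t b, propIntKernel σ α (φ τ - φ t) • φ' τ • f τ := by
  rw [propIntRight, integral_of_le htb, ← MeasureTheory.integral_smul]
  simp only [propIntKernel, smul_smul, mul_assoc]

theorem propIntRight_propIntRight_eq_setIntegral (htb : t ≤ b) :
    propIntRight b α σ φ φ' (propIntRight b β σ φ φ' f) t =
      ∫ τ in Ioc t b, ∫ s in Ioc τ b, propIntChainKernel φ φ' σ α β t τ s • φ' s • f s := by
  rw [propIntRight_eq_setIntegral htb]
  refine setIntegral_congr_fun measurableSet_Ioc fun τ hτ => ?_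
  simp only [propIntRight_eq_setIntegral hτ.2, ← MeasureTheory.integral_smul, smul_smul,
    propIntChainKernel]
  ring_nf

theorem propIntRight_semigroup_general (hσ : 0 < σ) (hα : 0 < α) (hβ : 0 < β) (htb : t ≤ b)
    (hφ : IsTimeChange φ φ' t b)
    (hf : IntegrableOn (fun s => propIntKernel σ (α + β) (φ s - φ t) • φ' s • f s) (Ioc t b)) :
    propIntRight b α σ φ φ' (propIntRight b β σ φ φ' f) t =
      propIntRight b (α + β) σ φ φ' f t := by
  rw [propIntRight_propIntRight_eq_setIntegral htb, propIntRight_eq_setIntegral htb,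
    hφ.setIntegral_Ioc_setIntegral_Ioc_propIntChainKernel_smul hσ hα hβ hf]

end Semigroup

/-- Semigroup property of the right proportional fractional integrals with respect to `φ`:
`I_b^{α,σ,φ} ∘ I_b^{β,σ,φ} = I_b^{α+β,σ,φ}` on `[a,b]`. -/
theorem propIntRight_semigroup (a b : ℝ) (hab : a < b) (σ : ℝ) (hσ : σ ∈ Set.Ioc (0 : ℝ) 1)
    (A B : ℝ) (hAa : A < a) (hbB : b < B)
    (φ φ' : ℝ → ℝ)
    (hφ : ∀ t ∈ Set.Ioo A B, HasDerivAt φ (φ' t) t)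
    (hφ'cont : ContinuousOn φ' (Set.Ioo A B))
    (hφ'pos : ∀ t ∈ Set.Ioo A B, 0 < φ' t)
    (α β : ℝ) (hα : 0 < α) (hβ : 0 < β)
    (f : ℝ → ℂ) (hf : ContinuousOn f (Set.Icc a b)) :
    ∀ t ∈ Set.Icc a b,
      propIntRight b α σ φ φ' (propIntRight b β σ φ φ' f) t =
        propIntRight b (α + β) σ φ φ' f t := by
  intro t ht
  have hφt := IsTimeChange.of_hasDerivAt_pos (Icc_subset_Ioo (hAa.trans_le ht.1) hbB) hφ hφ'pos
  exact propIntRight_semigroup_general hσ.1 hα hβ ht.2 hφt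
    (hφt.integrableOn_propIntKernel_smul (add_pos hα hβ) (hf.mono (Icc_subset_Icc_left ht.1)))
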